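/- arXiv:2008.03204 — 2 statements merged into one kernel-verified Lean document; each statement's English description precedes it below -/
import Mathlib

section
/- Let H ∈ [0,1/2), ζ > 0, p > 1, C > 0, χ := e^{−1/ζ}, and 0 < T < 1. Then ∫₀ᵀ ∫₀ˢ K(s−r) dr ds = I₁(T∧χ) + 𝟙_{T>χ} ( I₂(T,χ) + I₃(T,χ) ), where I₁(x) := C ζ^{−p} (log(1/x))^{1−p} [ x · E_p((H+1/2) log(1/x)) − E_p((H+3/2) log(1/x)) ], I₂(T,χ) := (C/(H+1/2)) [ (T^{H+3/2} − χ^{H+3/2})/(H+3/2) − (T−χ) χ^{H+1/2} ], and I₃(T,χ) := C ζ^{−p} (T−χ) (log(1/χ))^{1−p} E_p( (H+1/2) log(1/χ) ). -/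
open MeasureTheory

/-- The exponential integral `E_b(x) = ∫₁^∞ e^{-x t} t^{-b} dt`. -/
noncomputable def expIntegralE (b x : ℝ) : ℝ :=
  ∫ t in Set.Ioi (1 : ℝ), Real.exp (-x * t) * t ^ (-b)

/-- The log-modulated kernel `K(r) = C r^{H-1/2} max(ζ log(1/r), 1)^{-p}`. -/
noncomputable def logKernel (H ζ p C r : ℝ) : ℝ :=
  C * r ^ (H - 1/2) * (max (ζ * Real.log (1 / r)) 1) ^ (-p)

/-- `I₁(x)` in Lemma 5.2. -/
noncomputable def I₁ (H ζ p C x : ℝ) : ℝ :=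
  C * ζ ^ (-p) * (Real.log (1 / x)) ^ (1 - p) *
    (x * expIntegralE p ((H + 1/2) * Real.log (1 / x))
      - expIntegralE p ((H + 3/2) * Real.log (1 / x)))

/-- `I₂(T, χ)` in Lemma 5.2. -/
noncomputable def I₂ (H C T χ : ℝ) : ℝ :=
  C / (H + 1/2) * ((T ^ (H + 3/2) - χ ^ (H + 3/2)) / (H + 3/2) - (T - χ) * χ ^ (H + 1/2))

/-- `I₃(T, χ)` in Lemma 5.2. -/
noncomputable def I₃ (H ζ p C T χ : ℝ) : ℝ :=
  C * ζ ^ (-p) * (T - χ) * (Real.log (1 / χ)) ^ (1 - p) *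
    expIntegralE p ((H + 1/2) * Real.log (1 / χ))

/-!
Reversing the inner integral and integrating by parts turns the double integral into
`∫₀ᵀ (T - r) K(r) dr`. Multiplying `K` by `r` only shifts `H` to `H + 1`, so this weighted integral
is `T` times the integral of `K` for `H` minus the integral of `K` for `H + 1`. Below `χ` the
integral of `K` reduces to an exponential integral by the substitution `u = x ^ t`, and above `χ`
the kernel is a pure power.
-/

open Set Filter

theorem image_const_rpow_Ioi {x : ℝ} (hx0 : 0 < x) (hx1 : x < 1) (a : ℝ) :
    (fun t : ℝ ↦ x ^ t) '' Ioi a = Ioo 0 (x ^ a) := by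
  have rpow_lt_iff (s t : ℝ) : x ^ s < x ^ t ↔ t < s :=
    Real.rpow_lt_rpow_left_iff_of_base_lt_one hx0 hx1
  ext u
  constructor
  · rintro ⟨t, ht, rfl⟩
    exact ⟨Real.rpow_pos_of_pos hx0 t, (rpow_lt_iff t a).2 ht⟩
  · rintro ⟨hu0, hua⟩
    have rpow_logb : x ^ Real.logb x u = u := Real.rpow_logb hx0 hx1.ne hu0
    exact ⟨Real.logb x u, (rpow_lt_iff _ a).1 (by rwa [rpow_logb]), rpow_logb⟩

section ConstRpowSubstitution

variable {E : Type*} [NormedAddCommGroup E] [NormedSpace ℝ E]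

theorem integral_Ioo_eq_integral_Ioi_comp_const_rpow {x : ℝ} (hx0 : 0 < x) (hx1 : x < 1) (a : ℝ)
    (g : ℝ → E) :
    ∫ u in Ioo 0 (x ^ a), g u = ∫ t in Ioi a, (x ^ t * Real.log (1 / x)) • g (x ^ t) := by
  rw [← image_const_rpow_Ioi hx0 hx1, integral_image_eq_integral_deriv_smul_of_antitoneOn
    measurableSet_Ioi
    (fun t _ ↦ (Real.hasStrictDerivAt_const_rpow hx0 t).hasDerivAt.hasDerivWithinAt)
    ((Real.antitone_rpow_of_base_le_one hx0 hx1.le).antitoneOn _)]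
  simp only [one_div, Real.log_inv, mul_neg]

theorem integrableOn_Ioo_iff_integrableOn_Ioi_comp_const_rpow {x : ℝ} (hx0 : 0 < x) (hx1 : x < 1)
    (a : ℝ) (g : ℝ → E) :
    IntegrableOn g (Ioo 0 (x ^ a)) ↔
      IntegrableOn (fun t ↦ (x ^ t * Real.log (1 / x)) • g (x ^ t)) (Ioi a) := by
  rw [← image_const_rpow_Ioi hx0 hx1, integrableOn_image_iff_integrableOn_deriv_smul_of_antitoneOn
    measurableSet_Ioi
    (fun t _ ↦ (Real.hasStrictDerivAt_const_rpow hx0 t).hasDerivAt.hasDerivWithinAt)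
    ((Real.antitone_rpow_of_base_le_one hx0 hx1.le).antitoneOn _)]
  simp only [one_div, Real.log_inv, mul_neg]

end ConstRpowSubstitution

theorem integrableOn_exp_neg_mul_mul_rpow_Ioi {a x : ℝ} (ha : 0 < a) (hx : 0 < x) (q : ℝ) :
    IntegrableOn (fun t ↦ Real.exp (-x * t) * t ^ q) (Ioi a) := by
  have continuousOn_integrand : ContinuousOn (fun t ↦ Real.exp (-x * t) * t ^ q) (Ici a) :=
    (by fun_prop : Continuous fun t ↦ Real.exp (-x * t)).continuousOn.mul
      (continuousOn_id.rpow_const fun t ht ↦ Or.inl (ha.trans_le ht).ne')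
  refine integrable_of_isBigO_exp_neg (half_pos hx) continuousOn_integrand ?_
  have exp_mul_exp (t : ℝ) :
      Real.exp (-x * t) * Real.exp (x / 2 * t) = Real.exp (-(x / 2) * t) := by
    rw [← Real.exp_add]
    ring_nf
  simpa only [exp_mul_exp] using
    (Asymptotics.isBigO_refl (fun t ↦ Real.exp (-x * t)) atTop).mul
      (isLittleO_rpow_exp_pos_mul_atTop q (half_pos hx)).isBigO

section PowerLog

variable {x : ℝ}

/-- The integrand `u ^ (a - 1) * log (1 / u) ^ (-p)` after the substitution `u = x ^ t`. -/
theorem const_rpow_mul_log_mul_rpow_mul_log_rpow (hx0 : 0 < x) (hx1 : x < 1) (a p : ℝ) {t : ℝ}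
    (ht : 0 ≤ t) :
    x ^ t * Real.log (1 / x) * ((x ^ t) ^ (a - 1) * Real.log (1 / x ^ t) ^ (-p)) =
      Real.log (1 / x) ^ (1 - p) * (Real.exp (-(a * Real.log (1 / x)) * t) * t ^ (-p)) := by
  have log_pos : 0 < Real.log (1 / x) := Real.log_pos (one_lt_one_div hx0 hx1)
  have log_one_div_rpow : Real.log (1 / x ^ t) = Real.log (1 / x) * t := by
    simp only [one_div, Real.log_inv, Real.log_rpow hx0]
    ring
  have rpow_mul_rpow : x ^ t * (x ^ t) ^ (a - 1) = Real.exp (-(a * Real.log (1 / x)) * t) := by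
    rw [← Real.rpow_mul hx0.le, ← Real.rpow_add hx0, Real.rpow_def_of_pos hx0, one_div,
      Real.log_inv]
    ring_nf
  rw [log_one_div_rpow, Real.mul_rpow log_pos.le ht, ← rpow_mul_rpow, sub_eq_add_neg 1 p,
    Real.rpow_add log_pos, Real.rpow_one]
  ring

theorem integral_rpow_mul_log_rpow (hx0 : 0 < x) (hx1 : x < 1) (a p : ℝ) :
    ∫ u in (0 : ℝ)..x, u ^ (a - 1) * Real.log (1 / u) ^ (-p) =
      Real.log (1 / x) ^ (1 - p) * expIntegralE p (a * Real.log (1 / x)) := by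
  have substitution := integral_Ioo_eq_integral_Ioi_comp_const_rpow hx0 hx1 1
    fun u ↦ u ^ (a - 1) * Real.log (1 / u) ^ (-p)
  rw [Real.rpow_one] at substitution
  rw [intervalIntegral.integral_of_le hx0.le, integral_Ioc_eq_integral_Ioo, substitution,
    expIntegralE, ← integral_const_mul]
  exact setIntegral_congr_fun measurableSet_Ioi fun t ht ↦
    const_rpow_mul_log_mul_rpow_mul_log_rpow hx0 hx1 a p (zero_lt_one.trans ht).le

theorem intervalIntegrable_rpow_mul_log_rpow (hx0 : 0 < x) (hx1 : x < 1) {a : ℝ} (ha : 0 < a)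
    (p : ℝ) :
    IntervalIntegrable (fun u ↦ u ^ (a - 1) * Real.log (1 / u) ^ (-p)) volume 0 x := by
  have log_pos : 0 < Real.log (1 / x) := Real.log_pos (one_lt_one_div hx0 hx1)
  have substitution := integrableOn_Ioo_iff_integrableOn_Ioi_comp_const_rpow hx0 hx1 1
    fun u ↦ u ^ (a - 1) * Real.log (1 / u) ^ (-p)
  rw [Real.rpow_one] at substitution
  rw [intervalIntegrable_iff_integrableOn_Ioo_of_le hx0.le, substitution]
  have integrable_exp := (integrableOn_exp_neg_mul_mul_rpow_Ioi one_pos (mul_pos ha log_pos) (-p))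
    |>.integrable.const_mul (Real.log (1 / x) ^ (1 - p))
  refine IntegrableOn.congr_fun integrable_exp (fun t ht ↦ ?_) measurableSet_Ioi
  exact (const_rpow_mul_log_mul_rpow_mul_log_rpow hx0 hx1 a p (zero_lt_one.trans ht).le).symm

end PowerLog

theorem integral_integral_eq_integral_sub_mul {f : ℝ → ℝ} {a b : ℝ}
    (hf : IntervalIntegrable f volume a b) :
    ∫ s in a..b, ∫ r in a..s, f r = ∫ r in a..b, (b - r) * f r := by
  have weight_ac : AbsolutelyContinuousOnInterval (fun s ↦ b - s) a b :=
    ((LipschitzWith.const b).sub LipschitzWith.id).lipschitzOnWith.absolutelyContinuousOnInterval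
  have primitive_ac := hf.absolutelyContinuousOnInterval_intervalIntegral left_mem_uIcc
  have deriv_primitive : ∫ r in a..b, (b - r) * deriv (fun s ↦ ∫ v in a..s, f v) r =
      ∫ r in a..b, (b - r) * f r := by
    refine intervalIntegral.integral_congr_ae ?_
    filter_upwards [hf.ae_hasDerivAt_integral] with r hr hrab
    rw [(hr (uIoc_subset_uIcc hrab) a left_mem_uIcc).deriv]
  rw [← deriv_primitive, weight_ac.integral_mul_deriv_eq_deriv_mul primitive_ac]
  simp

theorem integral_integral_comp_sub_eq_integral_sub_mul {f : ℝ → ℝ} {T : ℝ}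
    (hf : IntervalIntegrable f volume 0 T) :
    ∫ s in (0 : ℝ)..T, ∫ r in (0 : ℝ)..s, f (s - r) = ∫ r in (0 : ℝ)..T, (T - r) * f r := by
  simp only [intervalIntegral.integral_comp_sub_left, sub_self, sub_zero,
    integral_integral_eq_integral_sub_mul hf]

section LogKernel

variable (H : ℝ) {ζ : ℝ} (p C : ℝ)

variable (ζ) in
theorem mul_logKernel {r : ℝ} (hr : 0 < r) :
    r * logKernel H ζ p C r = logKernel (H + 1) ζ p C r := by
  have rpow_succ : r ^ (H + 1 - 1 / 2) = r * r ^ (H - 1 / 2) := by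
    rw [add_sub_right_comm, Real.rpow_add_one hr.ne', mul_comm]
  rw [logKernel, logKernel, rpow_succ]
  ring

theorem one_le_mul_log_one_div_iff (hζ : 0 < ζ) {r : ℝ} (hr : 0 < r) :
    1 ≤ ζ * Real.log (1 / r) ↔ r ≤ Real.exp (-1 / ζ) := by
  rw [← Real.log_le_iff_le_exp hr, le_div_iff₀ hζ, one_div, Real.log_inv]
  constructor <;> intro h <;> linarith

theorem mul_log_one_div_le_one_iff (hζ : 0 < ζ) {r : ℝ} (hr : 0 < r) :
    ζ * Real.log (1 / r) ≤ 1 ↔ Real.exp (-1 / ζ) ≤ r := by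
  rw [← Real.le_log_iff_exp_le hr, div_le_iff₀ hζ, one_div, Real.log_inv]
  constructor <;> intro h <;> linarith

theorem exp_neg_one_div_lt_one (hζ : 0 < ζ) : Real.exp (-1 / ζ) < 1 :=
  Real.exp_lt_one_iff.2 (div_neg_of_neg_of_pos neg_one_lt_zero hζ)

theorem logKernel_of_le (hζ : 0 < ζ) {r : ℝ} (hr : 0 < r) (hrχ : r ≤ Real.exp (-1 / ζ)) :
    logKernel H ζ p C r =
      C * ζ ^ (-p) * (r ^ (H + 1 / 2 - 1) * Real.log (1 / r) ^ (-p)) := by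
  have log_nonneg : 0 ≤ Real.log (1 / r) :=
    Real.log_nonneg (one_le_one_div hr (hrχ.trans (exp_neg_one_div_lt_one hζ).le))
  rw [logKernel, max_eq_left ((one_le_mul_log_one_div_iff hζ hr).2 hrχ),
    Real.mul_rpow hζ.le log_nonneg]
  ring_nf

theorem logKernel_of_ge (hζ : 0 < ζ) {r : ℝ} (hχr : Real.exp (-1 / ζ) ≤ r) :
    logKernel H ζ p C r = C * r ^ (H - 1 / 2) := by
  have hr : 0 < r := (Real.exp_pos _).trans_le hχr
  rw [logKernel, max_eq_right ((mul_log_one_div_le_one_iff hζ hr).2 hχr), Real.one_rpow, mul_one]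

theorem integral_logKernel_of_le (hζ : 0 < ζ) {x : ℝ} (hx : 0 < x)
    (hxχ : x ≤ Real.exp (-1 / ζ)) :
    ∫ r in (0 : ℝ)..x, logKernel H ζ p C r =
      C * ζ ^ (-p) * (Real.log (1 / x) ^ (1 - p) *
        expIntegralE p ((H + 1 / 2) * Real.log (1 / x))) := by
  rw [← integral_rpow_mul_log_rpow hx (hxχ.trans_lt (exp_neg_one_div_lt_one hζ)),
    ← intervalIntegral.integral_const_mul]
  exact intervalIntegral.integral_congr_Ioo_of_le hx.le fun r hr ↦
    logKernel_of_le H p C hζ hr.1 (hr.2.le.trans hxχ)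

variable {H} in
theorem integral_logKernel_of_ge (hH : H + 1 / 2 ≠ 0) (hζ : 0 < ζ) {x y : ℝ}
    (hχx : Real.exp (-1 / ζ) ≤ x) (hχy : Real.exp (-1 / ζ) ≤ y) :
    ∫ r in x..y, logKernel H ζ p C r =
      C * ((y ^ (H + 1 / 2) - x ^ (H + 1 / 2)) / (H + 1 / 2)) := by
  have zero_notMem : (0 : ℝ) ∉ uIcc x y :=
    notMem_uIcc_of_lt ((Real.exp_pos _).trans_le hχx) ((Real.exp_pos _).trans_le hχy)
  have kernel_eq : EqOn (logKernel H ζ p C) (fun r ↦ C * r ^ (H - 1 / 2)) (uIcc x y) :=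
    fun r hr ↦ logKernel_of_ge H p C hζ ((le_min hχx hχy).trans hr.1)
  have exponent_eq : H - 1 / 2 + 1 = H + 1 / 2 := by ring
  rw [intervalIntegral.integral_congr kernel_eq, intervalIntegral.integral_const_mul,
    integral_rpow (Or.inr ⟨fun h ↦ hH (by linarith), zero_notMem⟩), exponent_eq]

variable {H} in
theorem intervalIntegrable_logKernel_of_le (hH : -1 / 2 < H) (hζ : 0 < ζ) {x : ℝ} (hx : 0 < x)
    (hxχ : x ≤ Real.exp (-1 / ζ)) : IntervalIntegrable (logKernel H ζ p C) volume 0 x := by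
  refine ((intervalIntegrable_rpow_mul_log_rpow hx (hxχ.trans_lt (exp_neg_one_div_lt_one hζ))
    (by linarith : 0 < H + 1 / 2) p).const_mul (C * ζ ^ (-p))).congr fun r hr ↦ ?_
  rw [uIoc_of_le hx.le] at hr
  exact (logKernel_of_le H p C hζ hr.1 (hr.2.trans hxχ)).symm

theorem intervalIntegrable_logKernel_of_ge (hζ : 0 < ζ) {x y : ℝ}
    (hχx : Real.exp (-1 / ζ) ≤ x) (hχy : Real.exp (-1 / ζ) ≤ y) :
    IntervalIntegrable (logKernel H ζ p C) volume x y := by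
  have zero_notMem : (0 : ℝ) ∉ uIcc x y :=
    notMem_uIcc_of_lt ((Real.exp_pos _).trans_le hχx) ((Real.exp_pos _).trans_le hχy)
  refine ((intervalIntegral.intervalIntegrable_rpow (r := H - 1 / 2)
    (Or.inr zero_notMem)).const_mul C).congr fun r hr ↦ ?_
  exact (logKernel_of_ge H p C hζ ((le_min hχx hχy).trans hr.1.le)).symm

variable {H}

theorem intervalIntegrable_logKernel (hH : -1 / 2 < H) (hζ : 0 < ζ) {T : ℝ} (hT : 0 < T) :
    IntervalIntegrable (logKernel H ζ p C) volume 0 T := by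
  obtain hTχ | hχT := le_total T (Real.exp (-1 / ζ))
  · exact intervalIntegrable_logKernel_of_le p C hH hζ hT hTχ
  · exact (intervalIntegrable_logKernel_of_le p C hH hζ (Real.exp_pos _) le_rfl).trans
      (intervalIntegrable_logKernel_of_ge H p C hζ le_rfl hχT)

theorem integral_logKernel_of_threshold_le (hH : -1 / 2 < H) (hζ : 0 < ζ) {χ T : ℝ}
    (hχ : χ = Real.exp (-1 / ζ)) (hχT : χ ≤ T) :
    ∫ r in (0 : ℝ)..T, logKernel H ζ p C r =
      C * ζ ^ (-p) * (Real.log (1 / χ) ^ (1 - p) *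
        expIntegralE p ((H + 1 / 2) * Real.log (1 / χ))) +
      C * ((T ^ (H + 1 / 2) - χ ^ (H + 1 / 2)) / (H + 1 / 2)) := by
  have hχ0 : 0 < χ := hχ ▸ Real.exp_pos _
  rw [← integral_logKernel_of_le H p C hζ hχ0 hχ.le,
    ← integral_logKernel_of_ge p C (by linarith) hζ hχ.ge (hχ.ge.trans hχT),
    intervalIntegral.integral_add_adjacent_intervals
      (intervalIntegrable_logKernel_of_le p C hH hζ hχ0 hχ.le)
      (intervalIntegrable_logKernel_of_ge H p C hζ hχ.ge (hχ.ge.trans hχT))]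

theorem integral_integral_logKernel (hH : -1 / 2 < H) (hζ : 0 < ζ) {T : ℝ} (hT : 0 < T) :
    ∫ s in (0 : ℝ)..T, ∫ r in (0 : ℝ)..s, logKernel H ζ p C (s - r) =
      T * (∫ r in (0 : ℝ)..T, logKernel H ζ p C r) -
        ∫ r in (0 : ℝ)..T, logKernel (H + 1) ζ p C r := by
  have integrable_kernel := intervalIntegrable_logKernel p C hH hζ hT
  have integrable_succ : IntervalIntegrable (logKernel (H + 1) ζ p C) volume 0 T :=
    intervalIntegrable_logKernel p C (by linarith) hζ hT
  rw [integral_integral_comp_sub_eq_integral_sub_mul integrable_kernel,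
    ← intervalIntegral.integral_const_mul,
    ← intervalIntegral.integral_sub (integrable_kernel.const_mul T) integrable_succ]
  refine intervalIntegral.integral_congr_Ioo_of_le hT.le fun r hr ↦ ?_
  simp only [sub_mul, mul_logKernel H ζ p C hr.1]

end LogKernel

theorem I₂_eq_sub {H : ℝ} (hH : -1 / 2 < H) (C : ℝ) {T χ : ℝ} (hT : 0 < T) (hχ : 0 < χ) :
    I₂ H C T χ = T * (C * ((T ^ (H + 1 / 2) - χ ^ (H + 1 / 2)) / (H + 1 / 2))) -
      C * ((T ^ (H + 3 / 2) - χ ^ (H + 3 / 2)) / (H + 3 / 2)) := by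
  have exponent_ne_zero : H + 1 / 2 ≠ 0 := by linarith
  have succ_ne_zero : H + 1 / 2 + 1 ≠ 0 := by linarith
  have exponent_succ : H + 3 / 2 = H + 1 / 2 + 1 := by ring
  rw [I₂, exponent_succ, Real.rpow_add_one hT.ne', Real.rpow_add_one hχ.ne']
  generalize H + 1 / 2 = a at exponent_ne_zero succ_ne_zero ⊢
  field_simp
  ring

theorem integrated_covariance_general (H ζ p C : ℝ) (hH : -1 / 2 < H) (hζ : 0 < ζ)
    (χ : ℝ) (hχ : χ = Real.exp (-1 / ζ)) (T : ℝ) (hT : 0 < T) :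
    ∫ s in (0 : ℝ)..T, ∫ r in (0 : ℝ)..s, logKernel H ζ p C (s - r)
      = I₁ H ζ p C (min T χ)
        + (if χ < T then I₂ H C T χ + I₃ H ζ p C T χ else 0) := by
  have exponent_succ : H + 1 + 1 / 2 = H + 3 / 2 := by ring
  rw [integral_integral_logKernel p C hH hζ hT]
  obtain hTχ | hχT := le_or_gt T χ
  · rw [min_eq_left hTχ, if_neg hTχ.not_gt, integral_logKernel_of_le H p C hζ hT (hTχ.trans hχ.le),
      integral_logKernel_of_le (H + 1) p C hζ hT (hTχ.trans hχ.le), exponent_succ, I₁]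
    ring
  · rw [min_eq_right hχT.le, if_pos hχT, integral_logKernel_of_threshold_le p C hH hζ hχ hχT.le,
      integral_logKernel_of_threshold_le p C (by linarith) hζ hχ hχT.le, exponent_succ,
      I₂_eq_sub hH C hT (hχ ▸ Real.exp_pos _), I₁, I₃]
    ring

theorem integrated_covariance (H ζ p C : ℝ) (hH0 : 0 ≤ H) (hH : H < 1/2)
    (hζ : 0 < ζ) (hp : 1 < p) (hC : 0 < C) (χ : ℝ) (hχ : χ = Real.exp (-1/ζ))
    (T : ℝ) (hT0 : 0 < T) (hT1 : T < 1) :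
    ∫ s in (0 : ℝ)..T, ∫ r in (0 : ℝ)..s, logKernel H ζ p C (s - r)
      = I₁ H ζ p C (min T χ)
        + (if χ < T then I₂ H C T χ + I₃ H ζ p C T χ else 0) :=
  integrated_covariance_general H ζ p C (by linarith) hζ χ hχ T hT0
end

section
/- Let H ∈ [0,1/2), ζ > 0, p > 1, C > 0. Then the limit 𝒦 := lim_{t→0⁺} ( ∫₀ᵗ K(s) ds ) / ( t ∫₀ᵗ K(s)² ds )^{1/2} exists and equals √(2H)/(H+1/2). In particular 𝒦 = 0 when H = 0, and 0 < 𝒦 ≤ 1 when 0 < H < 1/2. -/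
open MeasureTheory Filter

/-!
The kernel is regularly varying at `0⁺` with index `a = H - 1/2`, in the strong sense that
`t K'(t) / K(t) → a`. For an integrable `f` with `t f'(t) / f(t) → a` and `t f(t) → 0`, L'Hôpital's
rule gives `t f(t) / ∫₀ᵗ f → a + 1`, because the quotient of the derivatives is
`1 + t f'(t) / f(t)`. Apply this to `K` (index `H - 1/2`) and to `K²` (index `2 H - 1`), and use
`(∫₀ᵗ K) / √(t ∫₀ᵗ K²) = √(t K(t)² / ∫₀ᵗ K²) / (t K(t) / ∫₀ᵗ K)`.
With the integrals in the denominators, the critical case `H = 0`, where `K²` has index `-1`, needs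
no separate asymptotics.
-/

open scoped Topology

lemma integrableAtFilter_of_sq {α : Type*} [MeasurableSpace α] {μ : Measure α} {l : Filter α}
    [IsMeasurablyGenerated l] {f : α → ℝ} (hμ : μ.FiniteAtFilter l)
    (hmeas : StronglyMeasurableAtFilter f l μ)
    (hint : IntegrableAtFilter (fun x => f x ^ 2) l μ) : IntegrableAtFilter f l μ := by
  obtain ⟨s, hs, hμs⟩ := hμ
  have hone : IntegrableAtFilter (fun _ => (1 : ℝ)) l μ := ⟨s, hs, integrableOn_const hμs.ne⟩
  refine Asymptotics.IsBigO.integrableAtFilter (.of_bound 1 (.of_forall fun x => ?_)) hmeas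
    (hone.add hint)
  rw [Pi.add_apply, Real.norm_eq_abs, Real.norm_of_nonneg (by positivity), one_mul, ← sq_abs]
  nlinarith [sq_nonneg (|f x| - 1), abs_nonneg (f x)]

section PrimitiveAtLeftEndpoint

variable {E : Type*} [NormedAddCommGroup E] {f : ℝ → E} {a : ℝ}

lemma eventually_intervalIntegrable_nhdsGT (hf : IntegrableAtFilter f (𝓝[>] a)) :
    ∀ᶠ t in 𝓝[>] a, IntervalIntegrable f volume a t := by
  obtain ⟨s, hs, hfs⟩ := hf
  obtain ⟨u, hu, hus⟩ := mem_nhdsGT_iff_exists_Ioo_subset.mp hs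
  filter_upwards [Ioo_mem_nhdsGT hu] with t ht
  rw [intervalIntegrable_iff_integrableOn_Ioc_of_le ht.1.le]
  exact hfs.mono_set fun x hx => hus ⟨hx.1, hx.2.trans_lt ht.2⟩

lemma stronglyMeasurableAtFilter_nhdsGT (hf : ∀ᶠ t in 𝓝[>] a, ContinuousAt f t) :
    StronglyMeasurableAtFilter f (𝓝[>] a) := by
  obtain ⟨u, hu, hus⟩ := mem_nhdsGT_iff_exists_Ioo_subset.mp hf
  exact ⟨Set.Ioo a u, Ioo_mem_nhdsGT hu, ContinuousOn.aestronglyMeasurable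
    (fun x hx => (hus hx).continuousWithinAt) measurableSet_Ioo⟩

variable [NormedSpace ℝ E]

lemma tendsto_integral_nhdsGT (hf : IntegrableAtFilter f (𝓝[>] a)) :
    Tendsto (fun t => ∫ s in a..t, f s) (𝓝[>] a) (𝓝 0) := by
  obtain ⟨b, hint, hab : a < b⟩ :=
    ((eventually_intervalIntegrable_nhdsGT hf).and self_mem_nhdsWithin).exists
  have hcont := intervalIntegral.continuousOn_primitive_interval' hint Set.left_mem_uIcc
    a Set.left_mem_uIcc
  rw [ContinuousWithinAt, intervalIntegral.integral_same, Set.uIcc_of_le hab.le] at hcont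
  rw [← nhdsWithin_Ioo_eq_nhdsGT hab]
  exact hcont.mono_left (nhdsWithin_mono a Set.Ioo_subset_Icc_self)

lemma eventually_hasDerivAt_integral_nhdsGT [CompleteSpace E]
    (hint : IntegrableAtFilter f (𝓝[>] a)) (hcont : ∀ᶠ t in 𝓝[>] a, ContinuousAt f t) :
    ∀ᶠ t in 𝓝[>] a, HasDerivAt (fun u => ∫ s in a..u, f s) (f t) t := by
  obtain ⟨u, hu, hus⟩ := mem_nhdsGT_iff_exists_Ioo_subset.mp hcont
  filter_upwards [eventually_intervalIntegrable_nhdsGT hint, Ioo_mem_nhdsGT hu] with t hft ht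
  exact intervalIntegral.integral_hasDerivAt_right hft
    (ContinuousAt.stronglyMeasurableAtFilter isOpen_Ioo (fun x hx => hus hx) t ht) (hus ht)

end PrimitiveAtLeftEndpoint

/-- Regular variation of `f` at `0⁺` with index `a`, in the normalised form `t f'(t) / f(t) → a`
(the von Mises condition), which makes L'Hôpital's rule applicable to `t f(t) / ∫₀ᵗ f`. Only the
germ of `f` on the right of `0` is constrained. -/
structure IsRegularlyVaryingAtZero (f : ℝ → ℝ) (a : ℝ) : Prop where
  eventually_pos : ∀ᶠ t in 𝓝[>] 0, 0 < f t
  eventually_differentiableAt : ∀ᶠ t in 𝓝[>] 0, DifferentiableAt ℝ f t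
  tendsto_mul_logDeriv : Tendsto (fun t => t * logDeriv f t) (𝓝[>] 0) (𝓝 a)

namespace IsRegularlyVaryingAtZero

variable {f g : ℝ → ℝ} {a b : ℝ}

lemma eventually_continuousAt (hf : IsRegularlyVaryingAtZero f a) :
    ∀ᶠ t in 𝓝[>] 0, ContinuousAt f t :=
  hf.eventually_differentiableAt.mono fun _ ht => ht.continuousAt

lemma congr (hf : IsRegularlyVaryingAtZero f a) (hfg : f =ᶠ[𝓝[>] 0] g) :
    IsRegularlyVaryingAtZero g a := by
  have hnhds : ∀ᶠ t in 𝓝[>] (0 : ℝ), f =ᶠ[𝓝 t] g := by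
    filter_upwards [eventually_eventually_nhdsWithin.mpr hfg, self_mem_nhdsWithin] with t ht ht0
    rwa [isOpen_Ioi.nhdsWithin_eq ht0] at ht
  refine ⟨?_, ?_, hf.tendsto_mul_logDeriv.congr' ?_⟩
  · filter_upwards [hf.eventually_pos, hfg] with t ht hfgt
    rwa [← hfgt]
  · filter_upwards [hf.eventually_differentiableAt, hnhds] with t ht hfgt
    exact ht.congr_of_eventuallyEq hfgt.symm
  · filter_upwards [hnhds] with t hfgt
    rw [(logDeriv_congr_nhds hfgt).eq_of_nhds]

lemma const_mul {c : ℝ} (hc : 0 < c) (hf : IsRegularlyVaryingAtZero f a) :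
    IsRegularlyVaryingAtZero (fun t => c * f t) a where
  eventually_pos := hf.eventually_pos.mono fun _ => mul_pos hc
  eventually_differentiableAt := hf.eventually_differentiableAt.mono fun _ ht => ht.const_mul c
  tendsto_mul_logDeriv := by
    simpa only [logDeriv_const_mul _ c hc.ne'] using hf.tendsto_mul_logDeriv

lemma mul (hf : IsRegularlyVaryingAtZero f a) (hg : IsRegularlyVaryingAtZero g b) :
    IsRegularlyVaryingAtZero (fun t => f t * g t) (a + b) where
  eventually_pos := hf.eventually_pos.mp (hg.eventually_pos.mono fun _ hgt hft => mul_pos hft hgt)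
  eventually_differentiableAt := hf.eventually_differentiableAt.mp
    (hg.eventually_differentiableAt.mono fun _ hgt hft => hft.mul hgt)
  tendsto_mul_logDeriv := by
    refine (hf.tendsto_mul_logDeriv.add hg.tendsto_mul_logDeriv).congr' ?_
    filter_upwards [hf.eventually_pos, hg.eventually_pos, hf.eventually_differentiableAt,
      hg.eventually_differentiableAt] with t hft hgt hdf hdg
    rw [logDeriv_mul t hft.ne' hgt.ne' hdf hdg, mul_add]

lemma rpow_const (hf : IsRegularlyVaryingAtZero f a) (q : ℝ) :
    IsRegularlyVaryingAtZero (fun t => f t ^ q) (q * a) where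
  eventually_pos := hf.eventually_pos.mono fun _ ht => Real.rpow_pos_of_pos ht q
  eventually_differentiableAt := hf.eventually_pos.mp
    (hf.eventually_differentiableAt.mono fun _ hdf ht => hdf.rpow_const (Or.inl ht.ne'))
  tendsto_mul_logDeriv := by
    refine (hf.tendsto_mul_logDeriv.const_mul q).congr' ?_
    filter_upwards [hf.eventually_pos, hf.eventually_differentiableAt] with t ht hdf
    rw [logDeriv_apply, logDeriv_apply, (hdf.hasDerivAt.rpow_const (Or.inl ht.ne')).deriv,
      Real.rpow_sub_one ht.ne']
    have := (Real.rpow_pos_of_pos ht q).ne'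
    field_simp

lemma tendsto_mul_div_integral (hf : IsRegularlyVaryingAtZero f a)
    (hint : IntegrableAtFilter f (𝓝[>] 0)) (hzero : Tendsto (fun t => t * f t) (𝓝[>] 0) (𝓝 0)) :
    Tendsto (fun t => t * f t / ∫ s in (0 : ℝ)..t, f s) (𝓝[>] 0) (𝓝 (a + 1)) := by
  have hderiv_num : ∀ᶠ t in 𝓝[>] (0 : ℝ),
      HasDerivAt (fun t => t * f t) (1 * f t + t * deriv f t) t :=
    hf.eventually_differentiableAt.mono fun t ht => (hasDerivAt_id t).mul ht.hasDerivAt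
  have hderiv_den : ∀ᶠ t in 𝓝[>] (0 : ℝ), HasDerivAt (fun t => ∫ s in (0 : ℝ)..t, f s) (f t) t :=
    eventually_hasDerivAt_integral_nhdsGT hint hf.eventually_continuousAt
  refine HasDerivAt.lhopital_zero_nhdsGT hderiv_num hderiv_den
    (hf.eventually_pos.mono fun _ ht => ht.ne') hzero (tendsto_integral_nhdsGT hint)
    ((hf.tendsto_mul_logDeriv.add_const 1).congr' ?_)
  filter_upwards [hf.eventually_pos] with t ht
  rw [logDeriv_apply]
  field_simp
  ring

lemma tendsto_integral_div_sqrt (hf : IsRegularlyVaryingAtZero f a) (ha : a ≠ -1)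
    (hint : IntegrableAtFilter (fun t => f t ^ 2) (𝓝[>] 0))
    (hzero : Tendsto (fun t => t * f t ^ 2) (𝓝[>] 0) (𝓝 0)) :
    Tendsto (fun t => (∫ s in (0 : ℝ)..t, f s) / √(t * ∫ s in (0 : ℝ)..t, f s ^ 2))
      (𝓝[>] 0) (𝓝 (√(2 * a + 1) / (a + 1))) := by
  have hsq : IsRegularlyVaryingAtZero (fun t => f t ^ 2) (2 * a) := by
    simpa only [Real.rpow_ofNat] using hf.rpow_const 2
  have hid : Tendsto (fun t : ℝ => t) (𝓝[>] 0) (𝓝 0) := tendsto_id.mono_left nhdsWithin_le_nhds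
  have hzero_one : Tendsto (fun t => t * f t) (𝓝[>] 0) (𝓝 0) := by
    have hsqrt := (hid.mul hzero).sqrt
    rw [mul_zero, Real.sqrt_zero] at hsqrt
    refine hsqrt.congr' ?_
    filter_upwards [hf.eventually_pos, self_mem_nhdsWithin] with t hft (ht : 0 < t)
    rw [← mul_assoc, ← sq, ← mul_pow, Real.sqrt_sq (by positivity)]
  have hint_one : IntegrableAtFilter f (𝓝[>] 0) :=
    integrableAtFilter_of_sq (Measure.finiteAt_nhdsWithin _ _ _)
      (stronglyMeasurableAtFilter_nhdsGT hf.eventually_continuousAt) hint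
  have hlim := (hsq.tendsto_mul_div_integral hint hzero).sqrt.div
    (hf.tendsto_mul_div_integral hint_one hzero_one)
    (fun h => ha (eq_neg_of_add_eq_zero_left h))
  refine hlim.congr' ?_
  filter_upwards [hf.eventually_pos, self_mem_nhdsWithin] with t hft (ht : 0 < t)
  have hsqrt : √(t * f t ^ 2 / ∫ s in (0 : ℝ)..t, f s ^ 2) =
      t * f t / √(t * ∫ s in (0 : ℝ)..t, f s ^ 2) := by
    rw [← mul_div_mul_left _ _ ht.ne', ← mul_assoc, ← sq, ← mul_pow,
      Real.sqrt_div (by positivity), Real.sqrt_sq (by positivity)]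
  rw [Pi.div_apply, hsqrt, div_div_div_cancel_left' _ _ (by positivity)]

end IsRegularlyVaryingAtZero

lemma tendsto_neg_log_nhdsGT_zero : Tendsto (fun r => -Real.log r) (𝓝[>] 0) atTop :=
  tendsto_neg_atBot_atTop.comp Real.tendsto_log_nhdsGT_zero

lemma isRegularlyVaryingAtZero_id : IsRegularlyVaryingAtZero (fun r => r) 1 where
  eventually_pos := self_mem_nhdsWithin
  eventually_differentiableAt := .of_forall fun _ => differentiableAt_id
  tendsto_mul_logDeriv := by
    refine tendsto_const_nhds.congr' ?_
    filter_upwards [self_mem_nhdsWithin] with r (hr : 0 < r)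
    rw [logDeriv_id', mul_one_div_cancel hr.ne']

lemma isRegularlyVaryingAtZero_neg_log : IsRegularlyVaryingAtZero (fun r => -Real.log r) 0 where
  eventually_pos := tendsto_neg_log_nhdsGT_zero.eventually_gt_atTop 0
  eventually_differentiableAt := by
    filter_upwards [self_mem_nhdsWithin] with r (hr : 0 < r)
    exact (Real.differentiableAt_log hr.ne').neg
  tendsto_mul_logDeriv := by
    refine (tendsto_neg_log_nhdsGT_zero.const_div_atTop (-1)).congr' ?_
    filter_upwards [self_mem_nhdsWithin] with r (hr : 0 < r)
    rw [logDeriv_apply, (Real.hasDerivAt_log hr.ne').fun_neg.deriv]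
    field_simp

section PowerLog

variable {a q : ℝ}

lemma isRegularlyVaryingAtZero_rpow_mul_neg_log_rpow (a q : ℝ) :
    IsRegularlyVaryingAtZero (fun r => r ^ a * (-Real.log r) ^ q) a := by
  simpa only [mul_one, mul_zero, add_zero] using
    (isRegularlyVaryingAtZero_id.rpow_const a).mul (isRegularlyVaryingAtZero_neg_log.rpow_const q)

lemma tendsto_neg_log_rpow_nhdsGT_zero (hq : q < 0) :
    Tendsto (fun r => (-Real.log r) ^ q) (𝓝[>] 0) (𝓝 0) := by
  simpa only [neg_neg, Function.comp_def] using
    (tendsto_rpow_neg_atTop (neg_pos.mpr hq)).comp tendsto_neg_log_nhdsGT_zero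

lemma isLittleO_neg_log_rpow_rpow_nhdsGT_zero (q : ℝ) (ha : a < 0) :
    (fun r => (-Real.log r) ^ q) =o[𝓝[>] 0] fun r => r ^ a := by
  refine (isLittleO_abs_log_rpow_rpow_nhdsGT_zero q ha).congr' ?_ .rfl
  filter_upwards [Ioo_mem_nhdsGT one_pos] with r hr
  rw [abs_of_neg (Real.log_neg hr.1 hr.2)]

lemma tendsto_rpow_mul_neg_log_rpow_nhdsGT_zero (h : 0 < a ∨ a = 0 ∧ q < 0) :
    Tendsto (fun r => r ^ a * (-Real.log r) ^ q) (𝓝[>] 0) (𝓝 0) := by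
  obtain ha | ⟨rfl, hq⟩ := h
  · refine (isLittleO_neg_log_rpow_rpow_nhdsGT_zero q
      (neg_lt_zero.mpr ha)).tendsto_div_nhds_zero.congr' ?_
    filter_upwards [self_mem_nhdsWithin] with r (hr : 0 < r)
    rw [Real.rpow_neg hr.le, div_inv_eq_mul, mul_comm]
  · simpa only [Real.rpow_zero, one_mul] using tendsto_neg_log_rpow_nhdsGT_zero hq

lemma integrableAtFilter_inv_mul_neg_log_rpow (hq : q < -1) :
    IntegrableAtFilter (fun r => r⁻¹ * (-Real.log r) ^ q) (𝓝[>] 0) := by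
  have hlog : ∀ r ∈ Set.Ioc (0 : ℝ) (1 / 2), -Real.log r ≠ 0 := fun r hr =>
    (neg_pos.mpr (Real.log_neg hr.1 (by linarith [hr.2]))).ne'
  have hcont : ContinuousOn (fun r => (-Real.log r) ^ (q + 1)) (Set.Icc 0 (1 / 2)) := by
    intro r hr
    obtain rfl | hr0 := hr.1.eq_or_lt
    · refine (continuousWithinAt_Ioi_iff_Ici.mp ?_).mono Set.Icc_subset_Ici_self
      -- The value at `0` is the limit because `Real.log 0 = 0` and `0 ^ (q + 1) = 0`.
      rw [ContinuousWithinAt, Real.log_zero, neg_zero, Real.zero_rpow (by linarith)]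
      exact tendsto_neg_log_rpow_nhdsGT_zero (by linarith)
    · exact ((Real.continuousAt_log hr0.ne').neg.rpow_const
        (Or.inl (hlog r ⟨hr0, hr.2⟩))).continuousWithinAt
  have hderiv : ∀ r ∈ Set.Ioo (0 : ℝ) (1 / 2), HasDerivAt
      (fun r => (-Real.log r) ^ (q + 1) / -(q + 1)) (r⁻¹ * (-Real.log r) ^ q) r := by
    intro r hr
    have hpow := ((Real.hasDerivAt_log hr.1.ne').fun_neg.rpow_const (p := q + 1)
      (Or.inl (hlog r ⟨hr.1, hr.2.le⟩))).div_const (-(q + 1))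
    have hq1 : q + 1 ≠ 0 := by linarith
    refine hpow.congr_deriv ?_
    rw [add_sub_cancel_right]
    field_simp
  refine ⟨Set.Ioc 0 (1 / 2), Ioc_mem_nhdsGT (by norm_num),
    intervalIntegral.integrableOn_deriv_of_nonneg (hcont.div_const _) hderiv fun r hr => ?_⟩
  have := Real.log_neg hr.1 (by linarith [hr.2])
  exact mul_nonneg (inv_nonneg.mpr hr.1.le) (Real.rpow_nonneg (by linarith) q)

lemma integrableAtFilter_rpow_mul_neg_log_rpow (h : -1 < a ∨ a = -1 ∧ q < -1) :
    IntegrableAtFilter (fun r => r ^ a * (-Real.log r) ^ q) (𝓝[>] 0) := by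
  obtain ha | ⟨rfl, hq⟩ := h
  · have hpow : IntegrableAtFilter (fun r : ℝ => r ^ ((a - 1) / 2)) (𝓝[>] 0) :=
      ⟨Set.Ioo 0 1, Ioo_mem_nhdsGT one_pos,
        (intervalIntegral.integrableOn_Ioo_rpow_iff one_pos).mpr (by linarith)⟩
    refine Asymptotics.IsBigO.integrableAtFilter ?_
      (by fun_prop : Measurable _).stronglyMeasurable.stronglyMeasurableAtFilter hpow
    have hlog := isLittleO_neg_log_rpow_rpow_nhdsGT_zero q (a := -((a + 1) / 2)) (by linarith)
    refine ((Asymptotics.isBigO_refl (fun r : ℝ => r ^ a) _).mul hlog.isBigO).congr' .rfl ?_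
    filter_upwards [self_mem_nhdsWithin] with r (hr : 0 < r)
    rw [← Real.rpow_add hr]
    ring_nf
  · simpa only [Real.rpow_neg_one] using integrableAtFilter_inv_mul_neg_log_rpow hq

end PowerLog

section LogKernel

variable {H ζ p C : ℝ}

lemma logKernel_eventuallyEq (hζ : 0 < ζ) : logKernel H ζ p C =ᶠ[𝓝[>] 0]
    fun r => C * ζ ^ (-p) * (r ^ (H - 1 / 2) * (-Real.log r) ^ (-p)) := by
  filter_upwards [tendsto_neg_log_nhdsGT_zero.eventually_ge_atTop (1 / ζ)] with r hr
  have hlog : 1 ≤ ζ * -Real.log r := by rwa [div_le_iff₀' hζ] at hr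
  rw [logKernel, one_div r, Real.log_inv, max_eq_left hlog,
    Real.mul_rpow hζ.le (le_trans (by positivity) hr)]
  ring

lemma sq_logKernel_eventuallyEq (hζ : 0 < ζ) : (fun r => logKernel H ζ p C r ^ 2) =ᶠ[𝓝[>] 0]
    fun r => (C * ζ ^ (-p)) ^ 2 * (r ^ (2 * H - 1) * (-Real.log r) ^ (-2 * p)) := by
  filter_upwards [logKernel_eventuallyEq hζ, self_mem_nhdsWithin,
    tendsto_neg_log_nhdsGT_zero.eventually_ge_atTop 0] with r hK (hr : 0 < r) hlog
  rw [hK, mul_pow, mul_pow (r ^ _), ← Real.rpow_mul_natCast hr.le, ← Real.rpow_mul_natCast hlog]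
  push_cast
  ring_nf

lemma isRegularlyVaryingAtZero_logKernel (hζ : 0 < ζ) (hC : 0 < C) :
    IsRegularlyVaryingAtZero (logKernel H ζ p C) (H - 1 / 2) :=
  ((isRegularlyVaryingAtZero_rpow_mul_neg_log_rpow _ _).const_mul (by positivity)).congr
    (logKernel_eventuallyEq hζ).symm

lemma integrableAtFilter_sq_logKernel (hζ : 0 < ζ) (h : 0 < H ∨ H = 0 ∧ 1 / 2 < p) :
    IntegrableAtFilter (fun r => logKernel H ζ p C r ^ 2) (𝓝[>] 0) := by
  have hmeas : Measurable fun r => logKernel H ζ p C r ^ 2 := by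
    unfold logKernel
    fun_prop
  refine ((sq_logKernel_eventuallyEq hζ).trans_isBigO
    (Asymptotics.isBigO_const_mul_self _ _ _)).integrableAtFilter
    hmeas.stronglyMeasurable.stronglyMeasurableAtFilter
    (integrableAtFilter_rpow_mul_neg_log_rpow (by grind))

lemma tendsto_mul_sq_logKernel (hζ : 0 < ζ) (h : 0 < H ∨ H = 0 ∧ 0 < p) :
    Tendsto (fun r => r * logKernel H ζ p C r ^ 2) (𝓝[>] 0) (𝓝 0) := by
  have hlim := (tendsto_rpow_mul_neg_log_rpow_nhdsGT_zero (a := 2 * H) (q := -2 * p)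
    (by grind)).const_mul ((C * ζ ^ (-p)) ^ 2)
  rw [mul_zero] at hlim
  refine hlim.congr' ?_
  filter_upwards [sq_logKernel_eventuallyEq hζ, self_mem_nhdsWithin] with r hK (hr : 0 < r)
  rw [hK, Real.rpow_sub_one hr.ne']
  field_simp

end LogKernel

theorem limit_normalized_integrated_kernel_general (H ζ p C : ℝ) (hH0 : 0 ≤ H) (hζ : 0 < ζ)
    (hp : H = 0 → 1 / 2 < p) (hC : 0 < C) :
    Tendsto (fun t => (∫ s in (0 : ℝ)..t, logKernel H ζ p C s) /
        √(t * ∫ s in (0 : ℝ)..t, logKernel H ζ p C s ^ 2))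
      (𝓝[>] 0) (𝓝 (√(2 * H) / (H + 1 / 2)))
    ∧ (H = 0 → √(2 * H) / (H + 1 / 2) = 0)
    ∧ (0 < H → 0 < √(2 * H) / (H + 1 / 2) ∧ √(2 * H) / (H + 1 / 2) ≤ 1) := by
  have hcases : 0 < H ∨ H = 0 ∧ 1 / 2 < p := hH0.lt_or_eq.imp_right fun h => ⟨h.symm, hp h.symm⟩
  refine ⟨?_, fun hH => by simp [hH], fun hH => ⟨by positivity, ?_⟩⟩
  · have hlim := (isRegularlyVaryingAtZero_logKernel (p := p) hζ hC).tendsto_integral_div_sqrt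
      (by linarith) (integrableAtFilter_sq_logKernel hζ hcases)
      (tendsto_mul_sq_logKernel hζ (by grind))
    convert hlim using 3 <;> ring_nf
  · rw [div_le_one (by positivity), Real.sqrt_le_left (by positivity)]
    linarith [sq_nonneg (H - 1 / 2)]

theorem limit_normalized_integrated_kernel (H ζ p C : ℝ) (hH0 : 0 ≤ H) (hH : H < 1/2)
    (hζ : 0 < ζ) (hp : 1 < p) (hC : 0 < C) :
    Tendsto
      (fun t : ℝ =>
        (∫ s in (0 : ℝ)..t, logKernel H ζ p C s)
          / Real.sqrt (t * ∫ s in (0 : ℝ)..t, (logKernel H ζ p C s) ^ 2))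
      (nhdsWithin 0 (Set.Ioi 0)) (nhds (Real.sqrt (2 * H) / (H + 1/2)))
    ∧ (H = 0 → Real.sqrt (2 * H) / (H + 1/2) = 0)
    ∧ (0 < H → 0 < Real.sqrt (2 * H) / (H + 1/2) ∧ Real.sqrt (2 * H) / (H + 1/2) ≤ 1) :=
  limit_normalized_integrated_kernel_general H ζ p C hH0 hζ (fun _ => by linarith) hC
end
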